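/- arXiv:0709.0516 — 9 statements merged into one kernel-verified Lean document; each statement's English description precedes it below -/
import Mathlib

section
/- In the two-subchannel unknown-channel Gaussian interference game, the equal-split point is the unique symmetric Nash equilibrium: (i) p = P/2 is the unique maximizer over [0, P] of the map p ↦ U(p, P/2); and (ii) if q ∈ [0, P] satisfies U(q, q) ≥ U(p, q) for all p ∈ [0, P], then q = P/2. -/
open MeasureTheory

/-!
The payoff is the expectation of half the logarithm of `(1 + g p / A) (1 + g (P - p) / B)`, where
`A = N + h q` and `B = N + h (P - q)` are the noise-plus-interference levels. With `d = p - P / 2`,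
replacing `p` by `P / 2` increases this product by `g (g d² + d (A - B)) / (A B)`, and
`A - B = 2 h (q - P / 2)`. So the equal split strictly beats every other `p` lying on the same side
of `P / 2` as `q`: this applies to all `p` when `q = P / 2`, and to `p = q` in a symmetric
equilibrium.
-/

/-- The rate of a player with channel gain `g` who puts power `p` in the first of two parallel
Gaussian subchannels and `P - p` in the second, whose noise levels (interference included) are
`A` and `B`. -/
noncomputable def splitRate (P g A B p : ℝ) : ℝ :=
  (1 / 2) * Real.log (1 + g * p / A) + (1 / 2) * Real.log (1 + g * (P - p) / B)

/-- The expected payoff in the two-subchannel interference game: `g` is the random direct gain, `h`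
the random cross gain, `N` the background noise, and the player and its opponent put powers `p` and
`q` out of `P` in the first subchannel. -/
noncomputable def expectedPayoff {Ω : Type*} [MeasurableSpace Ω] (μ : Measure Ω) (P N : ℝ)
    (g h : Ω → ℝ) (p q : ℝ) : ℝ :=
  ∫ ω, splitRate P (g ω) (N + h ω * q) (N + h ω * (P - q)) p ∂μ

lemma half_mem_Icc_of_mem_Icc {P p : ℝ} (hp : p ∈ Set.Icc 0 P) : P / 2 ∈ Set.Icc 0 P := by
  have hP : 0 ≤ P := hp.1.trans hp.2
  exact ⟨by positivity, half_le_self hP⟩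

section SplitRate

variable {P g A B p : ℝ}

lemma splitRate_zero_gain : splitRate P 0 A B p = 0 := by
  simp [splitRate]

lemma splitRate_eq_half_log_mul (hg : 0 ≤ g) (hA : 0 < A) (hB : 0 < B) (hp : p ∈ Set.Icc 0 P) :
    splitRate P g A B p =
      (1 / 2) * Real.log ((1 + g * p / A) * (1 + g * (P - p) / B)) := by
  have hp₀ : 0 ≤ p := hp.1
  have hPp : 0 ≤ P - p := sub_nonneg.2 hp.2
  rw [Real.log_mul (by positivity) (by positivity), mul_add, splitRate]

lemma splitRate_lt_splitRate_half (hg : 0 < g) (hA : 0 < A) (hB : 0 < B) (hp : p ∈ Set.Icc 0 P)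
    (hne : p ≠ P / 2) (hside : 0 ≤ (p - P / 2) * (A - B)) :
    splitRate P g A B p < splitRate P g A B (P / 2) := by
  have hp₀ : 0 ≤ p := hp.1
  have hPp : 0 ≤ P - p := sub_nonneg.2 hp.2
  have gap : (1 + g * (P / 2) / A) * (1 + g * (P - P / 2) / B)
      - (1 + g * p / A) * (1 + g * (P - p) / B)
      = g * (g * (p - P / 2) ^ 2 + (p - P / 2) * (A - B)) / (A * B) := by
    field_simp
    ring
  have gap_pos : 0 < g * (g * (p - P / 2) ^ 2 + (p - P / 2) * (A - B)) / (A * B) := by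
    have : p - P / 2 ≠ 0 := sub_ne_zero.2 hne
    positivity
  have product_lt : (1 + g * p / A) * (1 + g * (P - p) / B)
      < (1 + g * (P / 2) / A) * (1 + g * (P - P / 2) / B) := by
    rwa [← gap, sub_pos] at gap_pos
  rw [splitRate_eq_half_log_mul hg.le hA hB hp,
    splitRate_eq_half_log_mul hg.le hA hB (half_mem_Icc_of_mem_Icc hp)]
  exact mul_lt_mul_of_pos_left (Real.log_lt_log (by positivity) product_lt) one_half_pos

lemma splitRate_le_splitRate_half (hg : 0 ≤ g) (hA : 0 < A) (hB : 0 < B) (hp : p ∈ Set.Icc 0 P)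
    (hside : 0 ≤ (p - P / 2) * (A - B)) :
    splitRate P g A B p ≤ splitRate P g A B (P / 2) := by
  rcases hg.eq_or_lt with rfl | hg
  · simp only [splitRate_zero_gain, le_refl]
  rcases eq_or_ne p (P / 2) with rfl | hne
  · rfl
  · exact (splitRate_lt_splitRate_half hg hA hB hp hne hside).le

end SplitRate

section Expectation

variable {Ω : Type*} [MeasurableSpace Ω] {μ : Measure Ω} {P N p q : ℝ} {f g h A B : Ω → ℝ}

lemma integrable_log_one_add (hf : Integrable f μ) (hf₀ : 0 ≤ᵐ[μ] f) :
    Integrable (fun ω => Real.log (1 + f ω)) μ := by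
  refine hf.mono' (hf.aemeasurable.const_add 1).log.aestronglyMeasurable ?_
  filter_upwards [hf₀] with ω (hω : 0 ≤ f ω)
  rw [Real.norm_of_nonneg (Real.log_nonneg (by linarith))]
  linarith [Real.log_le_sub_one_of_pos (show 0 < 1 + f ω by linarith)]

lemma integrable_div_of_ae_le (hf : Integrable f μ) (hA : AEMeasurable A μ) (hN : 0 < N)
    (hNA : ∀ᵐ ω ∂μ, N ≤ A ω) : Integrable (fun ω => f ω / A ω) μ := by
  refine (hf.norm.div_const N).mono' (hf.aemeasurable.div hA).aestronglyMeasurable ?_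
  filter_upwards [hNA] with ω hω
  rw [norm_div, Real.norm_of_nonneg (hN.le.trans hω)]
  gcongr

lemma integrable_log_one_add_mul_div (hg : Integrable g μ) (hg₀ : 0 ≤ᵐ[μ] g)
    (hA : AEMeasurable A μ) (hN : 0 < N) (hNA : ∀ᵐ ω ∂μ, N ≤ A ω) (hp : 0 ≤ p) :
    Integrable (fun ω => Real.log (1 + g ω * p / A ω)) μ := by
  refine integrable_log_one_add (integrable_div_of_ae_le (hg.mul_const p) hA hN hNA) ?_
  filter_upwards [hg₀, hNA] with ω hgω hNω
  exact div_nonneg (mul_nonneg hgω hp) (hN.le.trans hNω)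

lemma integrable_splitRate (hg : Integrable g μ) (hg₀ : 0 ≤ᵐ[μ] g) (hA : AEMeasurable A μ)
    (hB : AEMeasurable B μ) (hN : 0 < N) (hNA : ∀ᵐ ω ∂μ, N ≤ A ω) (hNB : ∀ᵐ ω ∂μ, N ≤ B ω)
    (hp : p ∈ Set.Icc 0 P) : Integrable (fun ω => splitRate P (g ω) (A ω) (B ω) p) μ :=
  ((integrable_log_one_add_mul_div hg hg₀ hA hN hNA hp.1).const_mul _).add
    ((integrable_log_one_add_mul_div hg hg₀ hB hN hNB (sub_nonneg.2 hp.2)).const_mul _)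

lemma integral_splitRate_lt_integral_splitRate_half (hg : Integrable g μ) (hg₀ : 0 ≤ᵐ[μ] g)
    (hg_ne : ¬g =ᵐ[μ] 0) (hA : AEMeasurable A μ) (hB : AEMeasurable B μ) (hN : 0 < N)
    (hNA : ∀ᵐ ω ∂μ, N ≤ A ω) (hNB : ∀ᵐ ω ∂μ, N ≤ B ω) (hp : p ∈ Set.Icc 0 P) (hne : p ≠ P / 2)
    (hside : ∀ᵐ ω ∂μ, 0 ≤ (p - P / 2) * (A ω - B ω)) :
    ∫ ω, splitRate P (g ω) (A ω) (B ω) p ∂μ < ∫ ω, splitRate P (g ω) (A ω) (B ω) (P / 2) ∂μ := by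
  have hint := integrable_splitRate hg hg₀ hA hB hN hNA hNB hp
  have hint_half := integrable_splitRate hg hg₀ hA hB hN hNA hNB (half_mem_Icc_of_mem_Icc hp)
  have hle : ∀ᵐ ω ∂μ,
      splitRate P (g ω) (A ω) (B ω) p ≤ splitRate P (g ω) (A ω) (B ω) (P / 2) := by
    filter_upwards [hg₀, hNA, hNB, hside] with ω hgω hAω hBω hsω
    exact splitRate_le_splitRate_half hgω (hN.trans_le hAω) (hN.trans_le hBω) hp hsω
  refine (integral_mono_ae hint hint_half hle).lt_of_ne fun heq => hg_ne ?_
  filter_upwards [hg₀, hNA, hNB, hside, (integral_eq_iff_of_ae_le hint hint_half hle).1 heq]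
    with ω hgω hAω hBω hsω heqω
  by_contra hgω_ne
  exact heqω.not_lt <| splitRate_lt_splitRate_half (hgω.lt_of_ne' hgω_ne) (hN.trans_le hAω)
    (hN.trans_le hBω) hp hne hsω

lemma expectedPayoff_lt_expectedPayoff_half (hN : 0 < N) (hg : Integrable g μ) (hg₀ : 0 ≤ᵐ[μ] g)
    (hg_ne : ¬g =ᵐ[μ] 0) (hh : AEMeasurable h μ) (hh₀ : 0 ≤ᵐ[μ] h) (hp : p ∈ Set.Icc 0 P)
    (hq : q ∈ Set.Icc 0 P) (hne : p ≠ P / 2) (hside : 0 ≤ (p - P / 2) * (q - P / 2)) :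
    expectedPayoff μ P N g h p q < expectedPayoff μ P N g h (P / 2) q := by
  refine integral_splitRate_lt_integral_splitRate_half hg hg₀ hg_ne
    ((hh.mul_const q).const_add N) ((hh.mul_const (P - q)).const_add N) hN ?_ ?_ hp hne ?_
  · filter_upwards [hh₀] with ω hω using le_add_of_nonneg_right (mul_nonneg hω hq.1)
  · filter_upwards [hh₀] with ω hω using
      le_add_of_nonneg_right (mul_nonneg hω (sub_nonneg.2 hq.2))
  · filter_upwards [hh₀] with ω (hω : 0 ≤ h ω)
    calc 0 ≤ 2 * h ω * ((p - P / 2) * (q - P / 2)) := by positivity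
      _ = (p - P / 2) * (N + h ω * q - (N + h ω * (P - q))) := by ring

end Expectation

theorem stmt_0_general {Ω : Type*} [MeasurableSpace Ω] {μ : Measure Ω} {P N : ℝ} {g h : Ω → ℝ}
    (hN : 0 < N) (hg : Integrable g μ) (hg₀ : 0 ≤ᵐ[μ] g) (hg_ne : ¬g =ᵐ[μ] 0)
    (hh : AEMeasurable h μ) (hh₀ : 0 ≤ᵐ[μ] h) :
    (∀ p ∈ Set.Icc 0 P, p ≠ P / 2 →
      expectedPayoff μ P N g h p (P / 2) < expectedPayoff μ P N g h (P / 2) (P / 2)) ∧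
    (∀ q ∈ Set.Icc 0 P,
      (∀ p ∈ Set.Icc 0 P, expectedPayoff μ P N g h p q ≤ expectedPayoff μ P N g h q q) →
        q = P / 2) := by
  refine ⟨fun p hp hne => ?_, fun q hq hbest => ?_⟩
  · exact expectedPayoff_lt_expectedPayoff_half hN hg hg₀ hg_ne hh hh₀ hp
      (half_mem_Icc_of_mem_Icc hp) hne (by simp only [sub_self, mul_zero, le_refl])
  · by_contra hne
    exact (hbest _ (half_mem_Icc_of_mem_Icc hq)).not_gt <|
      expectedPayoff_lt_expectedPayoff_half hN hg hg₀ hg_ne hh hh₀ hq hq hne (mul_self_nonneg _)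

/-- In the two-subchannel unknown-channel Gaussian interference game, the equal-split point
`P/2` is the unique symmetric Nash equilibrium: (i) `p = P/2` is the unique maximizer over
`[0, P]` of `p ↦ U p (P/2)`; and (ii) any symmetric best response `q` equals `P/2`. -/
theorem stmt_0
    {Ω : Type*} [MeasurableSpace Ω] (μ : Measure Ω) [IsProbabilityMeasure μ]
    (P N₀ a b : ℝ) (hP : 0 < P) (hN₀ : 0 < N₀) (ha : 0 < a) (hab : a ≤ b)
    (g11 g21 : Ω → ℝ) (hg11 : Measurable g11) (hg21 : Measurable g21)
    (hg11b : ∀ ω, a ≤ g11 ω ∧ g11 ω ≤ b) (hg21b : ∀ ω, a ≤ g21 ω ∧ g21 ω ≤ b)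
    (U : ℝ → ℝ → ℝ)
    (hU : ∀ p q, U p q =
      ∫ ω, ((1/2) * Real.log (1 + g11 ω * p / (N₀ + g21 ω * q)) +
            (1/2) * Real.log (1 + g11 ω * (P - p) / (N₀ + g21 ω * (P - q)))) ∂μ) :
    (∀ p ∈ Set.Icc (0:ℝ) P, p ≠ P / 2 → U p (P / 2) < U (P / 2) (P / 2)) ∧
    (∀ q ∈ Set.Icc (0:ℝ) P, (∀ p ∈ Set.Icc (0:ℝ) P, U p q ≤ U q q) → q = P / 2) := by
  obtain rfl : expectedPayoff μ P N₀ g11 g21 = U := funext₂ fun p q => (hU p q).symm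
  exact stmt_0_general hN₀ (.of_mem_Icc a b hg11.aemeasurable (.of_forall hg11b))
    (.of_forall fun ω => ha.le.trans (hg11b ω).1)
    (fun hzero => hzero.exists.elim fun ω hω => (ha.trans_le (hg11b ω).1).ne' hω)
    hg21.aemeasurable (.of_forall fun ω => ha.le.trans (hg21b ω).1)
end

section
/- In the K-subchannel unknown-channel Gaussian interference game, the uniform power allocation is the unique symmetric Nash equilibrium: if q ∈ S_P satisfies U_K(q, q) ≥ U_K(p, q) for all p ∈ S_P, then q_k = P/K for every k = 1, …, K; moreover the uniform vector itself satisfies this condition. -/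
open MeasureTheory

/-!
Exchanging the powers of two subchannels in one's own allocation, against an opponent who keeps
the original allocation, increases the product of the two factors `1 + SINR` by
`g h (x - y)² / ((N + h x) (N + h y))`. Hence at a symmetric equilibrium no two subchannels
can carry different powers, and the budget determines their common value. Conversely, against the
uniform allocation all subchannels look alike and the rate is concave in one's own power, so
Jensen's inequality makes the uniform allocation a best response.
-/

section SymmetricEquilibrium

variable {A β : Type*} [Preorder β]

/-- Symmetric Nash equilibria of a two-player symmetric game with strategy set `S`, where `U p q`
is the payoff of a player using `p` against an opponent using `q`. -/
structure IsSymmetricNash (S : Set A) (U : A → A → β) (q : A) : Prop where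
  mem : q ∈ S
  isMaxOn : IsMaxOn (fun p => U p q) S q

lemma isSymmetricNash_congr {S : Set A} {U V : A → A → β} {q : A}
    (h : ∀ p ∈ S, ∀ q ∈ S, U p q = V p q) :
    IsSymmetricNash S U q ↔ IsSymmetricNash S V q := by
  have isMaxOn_congr (hq : q ∈ S) :
      IsMaxOn (fun p => U p q) S q ↔ IsMaxOn (fun p => V p q) S q := by
    simp only [isMaxOn_iff]
    exact forall₂_congr fun p hp => by rw [h p hp q hq, h q hq q hq]
  exact ⟨fun hU => ⟨hU.mem, (isMaxOn_congr hU.mem).1 hU.isMaxOn⟩,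
    fun hV => ⟨hV.mem, (isMaxOn_congr hV.mem).2 hV.isMaxOn⟩⟩

end SymmetricEquilibrium

section SeparableGame

variable {ι : Type*} [Fintype ι]

lemma sum_lt_sum_swap [DecidableEq ι] {α : Type*} {φ : α → α → ℝ} {q : ι → α} {i j : ι}
    (hij : i ≠ j)
    (hφ : φ (q i) (q i) + φ (q j) (q j) < φ (q i) (q j) + φ (q j) (q i)) :
    ∑ k, φ (q k) (q k) < ∑ k, φ (q (Equiv.swap i j k)) (q k) := by
  rw [← sub_pos, ← Finset.sum_sub_distrib, Fintype.sum_eq_add i j hij]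
  · simp only [Equiv.swap_apply_left, Equiv.swap_apply_right]
    linarith
  · rintro k ⟨hki, hkj⟩
    rw [Equiv.swap_apply_of_ne_of_ne hki hkj, sub_self]

lemma IsSymmetricNash.apply_eq_of_pairwise [DecidableEq ι] {α : Type*} {T : Set α}
    {S : Set (ι → α)} {φ : α → α → ℝ} {q : ι → α}
    (hq : IsSymmetricNash S (fun p q => ∑ k, φ (p k) (q k)) q)
    (hS : ∀ i j, q ∘ Equiv.swap i j ∈ S) (hT : ∀ k, q k ∈ T)
    (hφ : T.Pairwise fun x y => φ x x + φ y y < φ x y + φ y x) (i j : ι) : q i = q j := by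
  by_contra hne
  have hij : i ≠ j := ne_of_apply_ne q hne
  exact (sum_lt_sum_swap hij (hφ (hT i) (hT j) hne)).not_ge (hq.isMaxOn (hS i j))

lemma sum_le_card_mul_of_concaveOn [Nonempty ι] {s : Set ℝ} {f : ℝ → ℝ} (hf : ConcaveOn ℝ s f)
    {p : ι → ℝ} (hp : ∀ k, p k ∈ s) :
    ∑ k, f (p k) ≤ Fintype.card ι * f ((∑ k, p k) / Fintype.card ι) := by
  have hcard : (0 : ℝ) < Fintype.card ι := Nat.cast_pos.2 Fintype.card_pos
  have jensen := hf.le_map_sum (t := Finset.univ) (w := fun _ => (Fintype.card ι : ℝ)⁻¹) (p := p)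
    (fun _ _ => inv_nonneg.2 hcard.le) (by simp) (fun k _ => hp k)
  simp only [smul_eq_mul, ← Finset.mul_sum] at jensen
  rwa [inv_mul_le_iff₀ hcard, inv_mul_eq_div] at jensen

/-- The allocations of a total power `P` among the subchannels in `ι`. -/
def powerAllocations (ι : Type*) [Fintype ι] (P : ℝ) : Set (ι → ℝ) :=
  {p | (∀ k, 0 ≤ p k) ∧ ∑ k, p k = P}

variable {P : ℝ}

lemma comp_equiv_mem_powerAllocations {p : ι → ℝ} (hp : p ∈ powerAllocations ι P)
    (σ : Equiv.Perm ι) : p ∘ σ ∈ powerAllocations ι P :=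
  ⟨fun k => hp.1 (σ k), (Equiv.sum_comp σ p).trans hp.2⟩

variable [Nonempty ι]

lemma const_mem_powerAllocations (hP : 0 ≤ P) :
    (fun _ => P / Fintype.card ι) ∈ powerAllocations ι P := by
  refine ⟨fun _ => by positivity, ?_⟩
  rw [Finset.sum_const, Finset.card_univ, nsmul_eq_mul, mul_div_cancel₀ _ (by simp)]

lemma eq_div_card_of_mem_powerAllocations {p : ι → ℝ} (hp : p ∈ powerAllocations ι P)
    (hconst : ∀ i j, p i = p j) : p = fun _ => P / Fintype.card ι := by
  funext k
  rw [eq_div_iff (by simp), ← hp.2, Finset.sum_congr rfl fun j _ => hconst j k, Finset.sum_const,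
    Finset.card_univ, nsmul_eq_mul, mul_comm]

theorem isSymmetricNash_sum_iff {φ : ℝ → ℝ → ℝ} (hP : 0 ≤ P)
    (hconcave : ConcaveOn ℝ (Set.Ici 0) fun x => φ x (P / Fintype.card ι))
    (hcross : (Set.Ici 0).Pairwise fun x y => φ x x + φ y y < φ x y + φ y x) {q : ι → ℝ} :
    IsSymmetricNash (powerAllocations ι P) (fun p q => ∑ k, φ (p k) (q k)) q ↔
      q = fun _ => P / Fintype.card ι := by
  classical
  constructor
  · intro hq
    exact eq_div_card_of_mem_powerAllocations hq.mem <| hq.apply_eq_of_pairwise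
      (fun i j => comp_equiv_mem_powerAllocations hq.mem (Equiv.swap i j)) hq.mem.1 hcross
  · rintro rfl
    refine ⟨const_mem_powerAllocations hP, fun p hp => ?_⟩
    calc ∑ k, φ (p k) (P / Fintype.card ι)
        ≤ Fintype.card ι * φ (P / Fintype.card ι) (P / Fintype.card ι) := by
          simpa only [hp.2] using sum_le_card_mul_of_concaveOn hconcave hp.1
      _ = ∑ _k : ι, φ (P / Fintype.card ι) (P / Fintype.card ι) := by
          rw [Finset.sum_const, Finset.card_univ, nsmul_eq_mul]

end SeparableGame

section GaussianRate

/-- The rate, in nats per channel use, of a Gaussian channel with noise power `N`, signal power `x`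
received with gain `g`, and interfering power `y` received with gain `h` and treated as noise. -/
noncomputable def gaussianRate (N g h x y : ℝ) : ℝ :=
  (1 / 2) * Real.log (1 + g * x / (N + h * y))

variable {N g h x y : ℝ}

lemma gaussianRate_nonneg (hN : 0 < N) (hg : 0 ≤ g) (hh : 0 ≤ h) (hx : 0 ≤ x) (hy : 0 ≤ y) :
    0 ≤ gaussianRate N g h x y := by
  have hsinr : 0 ≤ g * x / (N + h * y) := by positivity
  exact mul_nonneg (by norm_num) (Real.log_nonneg (by linarith))

lemma log_one_add_mul_le {c s : ℝ} (hc : 1 ≤ c) (hs : 0 ≤ s) :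
    Real.log (1 + c * s) ≤ c * Real.log (1 + s) := by
  rw [← Real.log_rpow (by positivity)]
  exact Real.log_le_log (by positivity) (one_add_mul_self_le_rpow_one_add (by linarith) hc)

lemma gaussianRate_le (hN : 0 < N) (hg : 0 ≤ g) (hh : 0 ≤ h) (hx : 0 ≤ x) (hy : 0 ≤ y) :
    gaussianRate N g h x y ≤ (1 / 2) * (1 + x / N) * Real.log (1 + g) := by
  rw [gaussianRate, mul_assoc]
  have hsinr : g * x / (N + h * y) ≤ (1 + x / N) * g := calc
    g * x / (N + h * y) ≤ g * x / N := by
      gcongr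
      exact le_add_of_nonneg_right (by positivity)
    _ = x / N * g := by ring
    _ ≤ (1 + x / N) * g := by gcongr; linarith
  gcongr
  calc Real.log (1 + g * x / (N + h * y))
      ≤ Real.log (1 + (1 + x / N) * g) := by gcongr
    _ ≤ (1 + x / N) * Real.log (1 + g) :=
      log_one_add_mul_le (le_add_of_nonneg_right (by positivity)) hg

lemma concaveOn_log_one_add_mul {c : ℝ} (hc : 0 ≤ c) :
    ConcaveOn ℝ (Set.Ici 0) fun x => Real.log (1 + c * x) := by
  have hlog := strictConcaveOn_log_Ioi.concaveOn.comp_affineMap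
    (AffineMap.lineMap (1 : ℝ) (1 + c))
  refine (hlog.subset ?_ (convex_Ici 0)).congr fun x _ => ?_
  · intro x (hx : 0 ≤ x)
    simp only [Set.mem_preimage, AffineMap.lineMap_apply, vsub_eq_sub, add_sub_cancel_left,
      smul_eq_mul, vadd_eq_add, Set.mem_Ioi]
    positivity
  · simp [AffineMap.lineMap_apply, add_comm, mul_comm]

lemma concaveOn_gaussianRate (hN : 0 < N) (hg : 0 ≤ g) (hh : 0 ≤ h) (hy : 0 ≤ y) :
    ConcaveOn ℝ (Set.Ici 0) fun x => gaussianRate N g h x y := by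
  have hlog := concaveOn_log_one_add_mul (show 0 ≤ g / (N + h * y) by positivity)
  refine (hlog.smul (show (0 : ℝ) ≤ 1 / 2 by norm_num)).congr fun x _ => ?_
  simp only [gaussianRate, smul_eq_mul, mul_div_right_comm]

lemma one_add_sinr_mul_one_add_sinr_cross (hx : N + h * x ≠ 0) (hy : N + h * y ≠ 0) :
    (1 + g * x / (N + h * y)) * (1 + g * y / (N + h * x)) =
      (1 + g * x / (N + h * x)) * (1 + g * y / (N + h * y)) +
        g * h * (x - y) ^ 2 / ((N + h * x) * (N + h * y)) := by
  generalize hA : N + h * x = A at *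
  generalize hB : N + h * y = B at *
  have hdiff : h * (x - y) = A - B := by rw [← hA, ← hB]; ring
  field_simp
  linear_combination -(g * (x - y)) * hdiff

lemma gaussianRate_add_gaussianRate {x' y' : ℝ} (hN : 0 < N) (hg : 0 ≤ g) (hh : 0 ≤ h)
    (hx : 0 ≤ x) (hy : 0 ≤ y) (hx' : 0 ≤ x') (hy' : 0 ≤ y') :
    gaussianRate N g h x y + gaussianRate N g h x' y' =
      (1 / 2) * Real.log ((1 + g * x / (N + h * y)) * (1 + g * x' / (N + h * y'))) := by
  rw [Real.log_mul (by positivity) (by positivity), mul_add, gaussianRate, gaussianRate]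

lemma gaussianRate_cross_le (hN : 0 < N) (hg : 0 ≤ g) (hh : 0 ≤ h) (hx : 0 ≤ x) (hy : 0 ≤ y) :
    gaussianRate N g h x x + gaussianRate N g h y y ≤
      gaussianRate N g h x y + gaussianRate N g h y x := by
  rw [gaussianRate_add_gaussianRate hN hg hh hx hx hy hy,
    gaussianRate_add_gaussianRate hN hg hh hx hy hy hx,
    one_add_sinr_mul_one_add_sinr_cross (by positivity) (by positivity)]
  gcongr
  exact le_add_of_nonneg_right (by positivity)

lemma gaussianRate_cross_lt (hN : 0 < N) (hg : 0 < g) (hh : 0 < h) (hx : 0 ≤ x) (hy : 0 ≤ y)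
    (hxy : x ≠ y) :
    gaussianRate N g h x x + gaussianRate N g h y y <
      gaussianRate N g h x y + gaussianRate N g h y x := by
  rw [gaussianRate_add_gaussianRate hN hg.le hh.le hx hx hy hy,
    gaussianRate_add_gaussianRate hN hg.le hh.le hx hy hy hx,
    one_add_sinr_mul_one_add_sinr_cross (by positivity) (by positivity)]
  have hgap : 0 < g * h * (x - y) ^ 2 / ((N + h * x) * (N + h * y)) := by
    have := sub_ne_zero.2 hxy
    positivity
  gcongr
  exact lt_add_of_pos_right _ hgap

end GaussianRate

section ErgodicRate

variable {Ω : Type*} [MeasurableSpace Ω] {μ : Measure Ω} {N x y : ℝ} {g h : Ω → ℝ}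

/-- The expected rate of a Gaussian subchannel with random gains `g` and `h`. -/
noncomputable def ergodicRate (μ : Measure Ω) (N : ℝ) (g h : Ω → ℝ) (x y : ℝ) : ℝ :=
  ∫ ω, gaussianRate N (g ω) (h ω) x y ∂μ

/-- The payoff of the unknown-channel interference game: the expected total rate over the
subchannels, all of which share the same random gains. -/
noncomputable def ergodicSumRate {ι : Type*} [Fintype ι] (μ : Measure Ω) (N : ℝ) (g h : Ω → ℝ)
    (p q : ι → ℝ) : ℝ :=
  ∫ ω, ∑ k, gaussianRate N (g ω) (h ω) (p k) (q k) ∂μ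

lemma integrable_gaussianRate (hN : 0 < N) (hgm : AEMeasurable g μ) (hhm : AEMeasurable h μ)
    (hg : 0 ≤ᵐ[μ] g) (hh : 0 ≤ᵐ[μ] h) (hlog : Integrable (fun ω => Real.log (1 + g ω)) μ)
    (hx : 0 ≤ x) (hy : 0 ≤ y) :
    Integrable (fun ω => gaussianRate N (g ω) (h ω) x y) μ := by
  refine (hlog.const_mul ((1 / 2) * (1 + x / N))).mono' ?_ ?_
  · unfold gaussianRate
    exact AEMeasurable.aestronglyMeasurable (by fun_prop)
  · filter_upwards [hg, hh] with ω hgω hhω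
    rw [Real.norm_of_nonneg (gaussianRate_nonneg hN hgω hhω hx hy)]
    exact gaussianRate_le hN hgω hhω hx hy

lemma concaveOn_ergodicRate (hN : 0 < N) (hg : 0 ≤ᵐ[μ] g) (hh : 0 ≤ᵐ[μ] h) (hy : 0 ≤ y)
    (hint : ∀ x, 0 ≤ x → Integrable (fun ω => gaussianRate N (g ω) (h ω) x y) μ) :
    ConcaveOn ℝ (Set.Ici 0) fun x => ergodicRate μ N g h x y := by
  refine integral_concaveOn_of_integrand_ae (convex_Ici 0) ?_ hint
  filter_upwards [hg, hh] with ω hgω hhω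
  exact concaveOn_gaussianRate hN hgω hhω hy

lemma ergodicRate_cross_lt (hN : 0 < N) (hg : 0 ≤ᵐ[μ] g) (hh : 0 ≤ᵐ[μ] h)
    (hpos : ∃ᵐ ω ∂μ, 0 < g ω ∧ 0 < h ω)
    (hint : ∀ x y, 0 ≤ x → 0 ≤ y → Integrable (fun ω => gaussianRate N (g ω) (h ω) x y) μ)
    (hx : 0 ≤ x) (hy : 0 ≤ y) (hxy : x ≠ y) :
    ergodicRate μ N g h x x + ergodicRate μ N g h y y <
      ergodicRate μ N g h x y + ergodicRate μ N g h y x := by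
  have hdiag := (hint x x hx hx).add (hint y y hy hy)
  have hcross := (hint x y hx hy).add (hint y x hy hx)
  have hle : ∀ᵐ ω ∂μ, gaussianRate N (g ω) (h ω) x x + gaussianRate N (g ω) (h ω) y y ≤
      gaussianRate N (g ω) (h ω) x y + gaussianRate N (g ω) (h ω) y x := by
    filter_upwards [hg, hh] with ω hgω hhω
    exact gaussianRate_cross_le hN hgω hhω hx hy
  simp only [ergodicRate]
  rw [← integral_add (hint x x hx hx) (hint y y hy hy),
    ← integral_add (hint x y hx hy) (hint y x hy hx)]
  refine (integral_mono_ae hdiag hcross hle).lt_of_ne fun heq => hpos ?_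
  filter_upwards [(integral_eq_iff_of_ae_le hdiag hcross hle).1 heq] with ω hω hposω
  exact (gaussianRate_cross_lt hN hposω.1 hposω.2 hx hy hxy).ne hω

lemma integrable_log_one_add_of_le [IsFiniteMeasure μ] {b : ℝ} (hgm : AEMeasurable g μ)
    (hg : 0 ≤ᵐ[μ] g) (hgb : ∀ᵐ ω ∂μ, g ω ≤ b) : Integrable (fun ω => Real.log (1 + g ω)) μ := by
  refine .of_bound (AEMeasurable.aestronglyMeasurable (by fun_prop)) (Real.log (1 + b)) ?_
  filter_upwards [hg, hgb] with ω (hgω : 0 ≤ g ω) hgbω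
  rw [Real.norm_of_nonneg (Real.log_nonneg (by linarith))]
  gcongr

theorem stmt_2_general {ι : Type*} [Fintype ι] [Nonempty ι] {P : ℝ} (hP : 0 ≤ P) (hN : 0 < N)
    (hgm : AEMeasurable g μ) (hhm : AEMeasurable h μ) (hg : 0 ≤ᵐ[μ] g) (hh : 0 ≤ᵐ[μ] h)
    (hpos : ∃ᵐ ω ∂μ, 0 < g ω ∧ 0 < h ω) (hlog : Integrable (fun ω => Real.log (1 + g ω)) μ)
    {q : ι → ℝ} :
    IsSymmetricNash (powerAllocations ι P) (ergodicSumRate μ N g h) q ↔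
      q = fun _ => P / Fintype.card ι := by
  have hint (x y : ℝ) (hx : 0 ≤ x) (hy : 0 ≤ y) :=
    integrable_gaussianRate hN hgm hhm hg hh hlog hx hy
  have hsum : ∀ p ∈ powerAllocations ι P, ∀ q ∈ powerAllocations ι P,
      ergodicSumRate μ N g h p q = ∑ k, ergodicRate μ N g h (p k) (q k) := fun p hp q hq =>
    integral_finsetSum _ fun k _ => hint (p k) (q k) (hp.1 k) (hq.1 k)
  have hu : 0 ≤ P / Fintype.card ι := by positivity
  exact (isSymmetricNash_congr hsum).trans <| isSymmetricNash_sum_iff hP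
    (concaveOn_ergodicRate hN hg hh hu fun x hx => hint x _ hx hu)
    fun x hx y hy hxy => ergodicRate_cross_lt hN hg hh hpos hint hx hy hxy

end ErgodicRate

/-- In the K-subchannel unknown-channel Gaussian interference game, the uniform power
allocation is the unique symmetric Nash equilibrium: any symmetric equilibrium allocation
`q` puts power `P/K` in every subchannel, and the uniform allocation is indeed a symmetric
equilibrium. -/
theorem stmt_2
    {Ω : Type*} [MeasurableSpace Ω] (μ : Measure Ω) [IsProbabilityMeasure μ]
    (P N₀ a b : ℝ) (K : ℕ) (hK : 2 ≤ K)
    (hP : 0 < P) (hN₀ : 0 < N₀) (ha : 0 < a) (hab : a ≤ b)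
    (g11 g21 : Ω → ℝ) (hg11 : Measurable g11) (hg21 : Measurable g21)
    (hg11b : ∀ ω, a ≤ g11 ω ∧ g11 ω ≤ b) (hg21b : ∀ ω, a ≤ g21 ω ∧ g21 ω ≤ b)
    (S : Set (Fin K → ℝ)) (hS : S = {p | (∀ k, 0 ≤ p k) ∧ ∑ k, p k = P})
    (U : (Fin K → ℝ) → (Fin K → ℝ) → ℝ)
    (hU : ∀ p q, U p q =
      ∫ ω, (∑ k, (1/2) * Real.log (1 + g11 ω * p k / (N₀ + g21 ω * q k))) ∂μ) :
    (∀ q ∈ S, (∀ p ∈ S, U p q ≤ U q q) → ∀ k, q k = P / K) ∧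
    ((fun _ : Fin K => P / K) ∈ S ∧
      ∀ p ∈ S, U p (fun _ => P / K) ≤ U (fun _ => P / K) (fun _ => P / K)) := by
  have : NeZero K := ⟨by lia⟩
  have hg11pos (ω : Ω) : 0 < g11 ω := ha.trans_le (hg11b ω).1
  have hg21pos (ω : Ω) : 0 < g21 ω := ha.trans_le (hg21b ω).1
  have hg11nonneg : 0 ≤ᵐ[μ] g11 := ae_of_all μ fun ω => (hg11pos ω).le
  have hg21nonneg : 0 ≤ᵐ[μ] g21 := ae_of_all μ fun ω => (hg21pos ω).le
  have hpos : ∃ᵐ ω ∂μ, 0 < g11 ω ∧ 0 < g21 ω :=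
    (ae_of_all μ fun ω => ⟨hg11pos ω, hg21pos ω⟩).frequently
  have hlog : Integrable (fun ω => Real.log (1 + g11 ω)) μ :=
    integrable_log_one_add_of_le hg11.aemeasurable hg11nonneg (ae_of_all μ fun ω => (hg11b ω).2)
  have nash_iff (q : Fin K → ℝ) : IsSymmetricNash S U q ↔ q = fun _ => P / K := by
    rw [show S = powerAllocations (Fin K) P from hS,
      show U = ergodicSumRate μ N₀ g11 g21 from funext₂ hU]
    simpa only [Fintype.card_fin] using stmt_2_general hP.le hN₀ hg11.aemeasurable
      hg21.aemeasurable hg11nonneg hg21nonneg hpos hlog (q := q)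
  have uniform := (nash_iff _).2 rfl
  exact ⟨fun q hq hmax => congrFun ((nash_iff q).1 ⟨hq, hmax⟩), uniform.mem, uniform.isMaxOn⟩
end

section
/- For all real g > 0, g' > 0, P > 0, N₀ > 0, every integer K ≥ 2, every γ ∈ [0, 1], and α = (1 − γ)/K, the expected payoff from spreading strictly exceeds the expected payoff from concentrating: (1 − γ)·[ ((K − 1)/2)·log(1 + (g·P/K)/N₀) + (1/2)·log(1 + (g·P/K)/(N₀ + g'·P)) ] + γ·(K/2)·log(1 + (g·P/K)/(N₀ + g'·P/K)) > α·[ ((K − 1)/2)·log(1 + g·P/N₀) + (1/2)·log(1 + g·P/(N₀ + g'·P)) ] + γ·(1/2)·log(1 + g·P/(N₀ + g'·P/K)). -/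
/-!
By Bernoulli's inequality, at any noise level a rate with power `S` is less than `K` times the rate
with power `S / K`. Against a concentrating opponent, a concentrating player's expected rate is the
average over the `K` subchannels, so the comparison holds subchannel by subchannel; against a
spreading opponent all subchannels have the same noise level. The claim mixes these two strict
inequalities with weights `1 - γ` and `γ`.
-/

theorem log_one_add_mul_lt_mul_log_one_add {p s : ℝ} (hp : 1 < p) (hs : s ≠ 0)
    (hps : 0 < 1 + p * s) : Real.log (1 + p * s) < p * Real.log (1 + s) := by
  have hs' : 0 < 1 + s := by nlinarith
  rw [← Real.log_rpow hs']
  exact Real.log_lt_log hps (one_add_mul_self_lt_rpow_one_add (by linarith) hs hp)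

section Rates

variable {K S N M : ℝ}

theorem log_one_add_div_lt_mul_log_one_add_div_div (hK : 1 < K) (hS : 0 < S) (hN : 0 < N) :
    Real.log (1 + S / N) < K * Real.log (1 + S / K / N) := by
  have : 0 < K := one_pos.trans hK
  have hmul : K * (S / K / N) = S / N := by field_simp
  rw [← hmul]
  exact log_one_add_mul_lt_mul_log_one_add hK (by positivity) (by positivity)

theorem concentrated_rate_div_lt_spread_rate (hK : 1 < K) (hS : 0 < S) (hN : 0 < N) (hM : 0 < M) :
    ((K - 1) / 2 * Real.log (1 + S / N) + 1 / 2 * Real.log (1 + S / M)) / K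
      < (K - 1) / 2 * Real.log (1 + S / K / N) + 1 / 2 * Real.log (1 + S / K / M) := by
  have : 0 < (K - 1) / 2 := by linarith
  rw [div_lt_iff₀' (one_pos.trans hK)]
  calc
    _ < (K - 1) / 2 * (K * Real.log (1 + S / K / N))
          + 1 / 2 * (K * Real.log (1 + S / K / M)) := by
      gcongr ?_ * ?_ + ?_ * ?_
      · exact log_one_add_div_lt_mul_log_one_add_div_div hK hS hN
      · exact log_one_add_div_lt_mul_log_one_add_div_div hK hS hM
    _ = _ := by ring

end Rates

theorem stmt_4_general {g g' P N₀ K γ α : ℝ} (hg : 0 < g) (hg' : 0 ≤ g') (hP : 0 < P)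
    (hN₀ : 0 < N₀) (hK : 1 < K) (hγ : γ ∈ Set.Icc (0 : ℝ) 1) (hα : α = (1 - γ) / K) :
    α * ((K - 1) / 2 * Real.log (1 + g * P / N₀)
          + 1 / 2 * Real.log (1 + g * P / (N₀ + g' * P)))
      + γ * (1 / 2 * Real.log (1 + g * P / (N₀ + g' * P / K)))
    < (1 - γ) * ((K - 1) / 2 * Real.log (1 + (g * P / K) / N₀)
          + 1 / 2 * Real.log (1 + (g * P / K) / (N₀ + g' * P)))
      + γ * (K / 2 * Real.log (1 + (g * P / K) / (N₀ + g' * P / K))) := by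
  have : 0 < K := one_pos.trans hK
  have hS : 0 < g * P := mul_pos hg hP
  have opponent_concentrates := concentrated_rate_div_lt_spread_rate hK hS hN₀
    (show 0 < N₀ + g' * P by positivity)
  have opponent_spreads :
      1 / 2 * Real.log (1 + g * P / (N₀ + g' * P / K))
        < K / 2 * Real.log (1 + (g * P / K) / (N₀ + g' * P / K)) := by
    linarith [log_one_add_div_lt_mul_log_one_add_div_div hK hS
      (show 0 < N₀ + g' * P / K by positivity)]
  have mixture := lineMap_strict_mono_endpoints opponent_concentrates opponent_spreads hγ.1 hγ.2
  rw [AffineMap.lineMap_apply_ring, AffineMap.lineMap_apply_ring] at mixture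
  rwa [hα, div_mul_eq_mul_div, ← mul_div_assoc']

/-- With `α = (1 − γ)/K`, the expected payoff from spreading power equally over all `K`
subchannels strictly exceeds the expected payoff from concentrating full power in a
single subchannel (key step of Theorem 2). -/
theorem stmt_4 (g g' P N₀ : ℝ) (hg : 0 < g) (hg' : 0 < g') (hP : 0 < P) (hN₀ : 0 < N₀)
    (K : ℕ) (hK : 2 ≤ K) (γ α : ℝ) (hγ : γ ∈ Set.Icc (0:ℝ) 1) (hα : α = (1 - γ) / K) :
    α * (((K : ℝ) - 1) / 2 * Real.log (1 + g * P / N₀)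
          + 1 / 2 * Real.log (1 + g * P / (N₀ + g' * P)))
      + γ * (1 / 2 * Real.log (1 + g * P / (N₀ + g' * P / K)))
    < (1 - γ) * (((K : ℝ) - 1) / 2 * Real.log (1 + (g * P / K) / N₀)
          + 1 / 2 * Real.log (1 + (g * P / K) / (N₀ + g' * P)))
      + γ * ((K : ℝ) / 2 * Real.log (1 + (g * P / K) / (N₀ + g' * P / K))) := by
  exact stmt_4_general hg hg'.le hP hN₀ (by exact_mod_cast hK) hγ hα
end

section
/- For all real g ≥ 0, P > 0, N₀ > 0: (1/2)·log(1 + P/(2·N₀)) + (1/2)·log(1 + (P/2)/(N₀ + g·P)) > (1/2)·log(1 + P/N₀) if and only if g < 1/2. (Hence, when the primary concentrates its power in one subchannel, the secondary prefers to spread if g < 1/2 and to occupy the free subchannel if g > 1/2.) -/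
/-!
The capacity of a Gaussian channel obeys a chain rule: power `p + q` over noise `N` carries as much
as power `p` over noise `N` together with power `q` over noise `N + p`. So moving power `q` to a
second channel of noise `M` helps exactly when that channel is quieter than the effective noise
`N + p` which this power met in the first one. With `p = θ * P` and `M = N₀ + g * P`, this is
`g < θ`.
-/

open Set

/-- The capacity, in nats per channel use, of the real Gaussian channel with signal power `P` and
noise power `N`. -/
noncomputable def gaussianCapacity (P N : ℝ) : ℝ :=
  (1/2) * Real.log (1 + P / N)

section

variable {p q N M : ℝ}

theorem gaussianCapacity_add (hN : 0 < N) (hp : 0 ≤ p) (hq : 0 ≤ q) :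
    gaussianCapacity (p + q) N = gaussianCapacity p N + gaussianCapacity q (N + p) := by
  have hp' : 0 < 1 + p / N := by positivity
  have hq' : 0 < 1 + q / (N + p) := by positivity
  have one_add_div_add : 1 + (p + q) / N = (1 + p / N) * (1 + q / (N + p)) := by
    field_simp
    ring
  unfold gaussianCapacity
  rw [one_add_div_add, Real.log_mul hp'.ne' hq'.ne', mul_add]

theorem gaussianCapacity_strictAntiOn (hq : 0 < q) :
    StrictAntiOn (gaussianCapacity q) (Ioi 0) := by
  intro N (hN : 0 < N) M (hM : 0 < M) hNM
  unfold gaussianCapacity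
  gcongr

theorem gaussianCapacity_add_lt_iff (hN : 0 < N) (hM : 0 < M) (hp : 0 ≤ p) (hq : 0 < q) :
    gaussianCapacity (p + q) N < gaussianCapacity p N + gaussianCapacity q M ↔ M < N + p := by
  rw [gaussianCapacity_add hN hp hq.le, add_lt_add_iff_left]
  exact (gaussianCapacity_strictAntiOn hq).lt_iff_gt (add_pos_of_pos_of_nonneg hN hp) hM

end

theorem stmt_6_general {g P N₀ θ : ℝ} (hP : 0 < P) (hN₀ : 0 < N₀) (hM : 0 < N₀ + g * P)
    (hθ₀ : 0 ≤ θ) (hθ₁ : θ < 1) :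
    (1/2) * Real.log (1 + θ * P / N₀) + (1/2) * Real.log (1 + (1 - θ) * P / (N₀ + g * P))
      > (1/2) * Real.log (1 + P / N₀) ↔ g < θ := by
  have hsplit := gaussianCapacity_add_lt_iff hN₀ hM (mul_nonneg hθ₀ hP.le)
    (mul_pos (sub_pos.2 hθ₁) hP)
  have hpower : θ * P + (1 - θ) * P = P := by ring
  rwa [hpower, add_lt_add_iff_left, mul_lt_mul_iff_left₀ hP] at hsplit

/-- When the primary concentrates its power in one subchannel, the secondary prefers to
spread if and only if `g < 1/2`. -/
theorem stmt_6 (g P N₀ : ℝ) (hg : 0 ≤ g) (hP : 0 < P) (hN₀ : 0 < N₀) :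
    (1/2) * Real.log (1 + P / (2 * N₀)) + (1/2) * Real.log (1 + (P / 2) / (N₀ + g * P))
      > (1/2) * Real.log (1 + P / N₀) ↔ g < 1/2 := by
  convert stmt_6_general (θ := 1/2) hP hN₀ (by positivity : 0 < N₀ + g * P)
    one_half_pos.le one_half_lt_one using 5 <;> ring
end

section
/- For all real g ≥ 0, P > 0, N₀ > 0: log(1 + (P/2)/(N₀ + g·P/2)) > (1/2)·log(1 + P/N₀) if and only if g < g*, where g* = 1/(√(1 + P/N₀) − 1) − 2·N₀/P. -/
/-! With `a = g + 2N₀/P`, the reciprocal of the signal-to-interference-plus-noise ratio, spreading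
yields the rate `log (1 + 1/a)`, while sharing yields `log √(1 + P/N₀)`. Since `a ↦ 1 + 1/a` is
decreasing, comparing the two rates amounts to comparing `a` with `1 / (√(1 + P/N₀) - 1)`. -/

lemma div_add_mul_self_eq_one_div {K : Type*} [DivisionSemiring K] {p : K} (hp : p ≠ 0) (n g : K) :
    p / (n + g * p) = 1 / (g + n / p) := by
  rw [add_div' n g p hp, one_div_div, add_comm]

lemma log_lt_log_one_add_one_div_iff {y a : ℝ} (hy : 1 < y) (ha : 0 < a) :
    Real.log y < Real.log (1 + 1 / a) ↔ a < 1 / (y - 1) := by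
  rw [Real.log_lt_log_iff (by positivity) (by positivity), ← sub_lt_iff_lt_add',
    lt_one_div (sub_pos.mpr hy) ha]

lemma half_mul_log_lt_log_one_add_one_div_iff {s a : ℝ} (hs : 0 < s) (ha : 0 < a) :
    (1 / 2) * Real.log (1 + s) < Real.log (1 + 1 / a) ↔ a < 1 / (√(1 + s) - 1) := by
  have one_lt_sqrt : 1 < √(1 + s) := Real.lt_sqrt_of_sq_lt (by linarith)
  have half_log : (1 / 2) * Real.log (1 + s) = Real.log √(1 + s) := by
    rw [Real.log_sqrt (by positivity), one_div_mul_eq_div]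
  rw [half_log, log_lt_log_one_add_one_div_iff one_lt_sqrt ha]

theorem stmt_7_general {g P N₀ : ℝ} (hP : 0 < P) (hN₀ : 0 < N₀) (hg : -(2 * N₀ / P) < g) :
    Real.log (1 + (P / 2) / (N₀ + g * P / 2)) > (1/2) * Real.log (1 + P / N₀) ↔
      g < 1 / (Real.sqrt (1 + P / N₀) - 1) - 2 * N₀ / P := by
  have sinr_eq : (P / 2) / (N₀ + g * P / 2) = 1 / (g + 2 * N₀ / P) := by
    rw [mul_div_assoc, div_add_mul_self_eq_one_div (half_pos hP).ne', div_div_eq_mul_div,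
      mul_comm N₀]
  rw [sinr_eq, gt_iff_lt, half_mul_log_lt_log_one_add_one_div_iff (div_pos hP hN₀)
    (neg_lt_iff_pos_add.mp hg), lt_sub_iff_add_lt]

/-- A user prefers that both users spread (rather than that both share disjoint
subchannels) if and only if its incident gain is below the threshold
`g* = 1/(√(1 + P/N₀) − 1) − 2N₀/P`. -/
theorem stmt_7 (g P N₀ : ℝ) (hg : 0 ≤ g) (hP : 0 < P) (hN₀ : 0 < N₀) :
    Real.log (1 + (P / 2) / (N₀ + g * P / 2)) > (1/2) * Real.log (1 + P / N₀) ↔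
      g < 1 / (Real.sqrt (1 + P / N₀) - 1) - 2 * N₀ / P :=
  stmt_7_general hP hN₀ ((neg_neg_of_pos (by positivity)).trans_le hg)
end

section
/- For all real P > 0, N₀ > 0 and g ≥ 1/2: (1/2)·log(1 + P/N₀) > log(1 + (P/2)/(N₀ + g·P/2)). (That is, whenever the secondary's incident interference gain g₁₂ exceeds 1/2, its payoff from sharing disjoint subchannels, Π₂^share, strictly exceeds its payoff when both users spread, Π₂^spread.) -/
/-!
Put `s = √(1 + P / N₀)`. The sharing payoff is `log s`, and since `P / N₀ = (s - 1) * (s + 1)`,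
the factor `s - 1` cancels twice from the comparison of the two payoffs: sharing beats spreading
exactly when `1 / (1 + s) < g`. As `s > 1`, this threshold lies below `1 / 2`.
-/

theorem log_lt_half_mul_log_iff {a b : ℝ} (ha : 0 < a) (hb : 0 < b) :
    Real.log a < 1 / 2 * Real.log b ↔ a < √b := by
  rw [one_div_mul_eq_div, ← Real.log_sqrt hb.le]
  exact Real.log_lt_log_iff ha (Real.sqrt_pos.2 hb)

theorem one_add_div_lt_iff_one_div_one_add_lt {K : Type*} [Field K] [LinearOrder K]
    [IsStrictOrderedRing K] {s g : K} (hs : 1 < s) (hg : 0 < 2 + g * (s ^ 2 - 1)) :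
    1 + (s ^ 2 - 1) / (2 + g * (s ^ 2 - 1)) < s ↔ 1 / (1 + s) < g := by
  have hs_sub : 0 < s - 1 := sub_pos.2 hs
  calc 1 + (s ^ 2 - 1) / (2 + g * (s ^ 2 - 1)) < s
      ↔ s ^ 2 - 1 < (s - 1) * (2 + g * (s ^ 2 - 1)) := by
        rw [← lt_sub_iff_add_lt', div_lt_iff₀ hg]
    _ ↔ (s - 1) * (s + 1) < (s - 1) * (2 + g * (s ^ 2 - 1)) := by
        rw [show s ^ 2 - 1 = (s - 1) * (s + 1) by ring]
    _ ↔ s + 1 < 2 + g * (s ^ 2 - 1) := mul_lt_mul_iff_right₀ hs_sub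
    _ ↔ (s - 1) * 1 < (s - 1) * (g * (1 + s)) := by
        constructor <;> intro h <;> linarith
    _ ↔ 1 < g * (1 + s) := mul_lt_mul_iff_right₀ hs_sub
    _ ↔ 1 / (1 + s) < g := (div_lt_iff₀ (by linarith)).symm

theorem one_lt_sqrt_one_add {x : ℝ} (hx : 0 < x) : 1 < √(1 + x) :=
  Real.lt_sqrt_of_sq_lt (by linarith)

theorem one_div_one_add_sqrt_one_add_lt_half {x : ℝ} (hx : 0 < x) :
    1 / (1 + √(1 + x)) < 1 / 2 :=
  one_div_lt_one_div_of_lt two_pos (by linarith [one_lt_sqrt_one_add hx])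

theorem stmt_10_general {P N₀ g : ℝ} (hP : 0 < P) (hN₀ : 0 < N₀) (hg : 0 < N₀ + g * P / 2) :
    (1 / 2) * Real.log (1 + P / N₀) > Real.log (1 + (P / 2) / (N₀ + g * P / 2)) ↔
      1 / (1 + √(1 + P / N₀)) < g := by
  set s := √(1 + P / N₀) with hs
  have one_lt_s : 1 < s := one_lt_sqrt_one_add (div_pos hP hN₀)
  have sq_s_sub_one : s ^ 2 - 1 = P / N₀ := by
    rw [hs, Real.sq_sqrt (by positivity), add_sub_cancel_left]
  have normalized_denom : 2 + g * (s ^ 2 - 1) = (N₀ + g * P / 2) * (2 / N₀) := by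
    rw [sq_s_sub_one]
    field_simp
  have normalized_ratio :
      (P / 2) / (N₀ + g * P / 2) = (s ^ 2 - 1) / (2 + g * (s ^ 2 - 1)) := by
    rw [normalized_denom, sq_s_sub_one]
    field_simp
  rw [gt_iff_lt, log_lt_half_mul_log_iff (by positivity) (by positivity), ← hs, normalized_ratio]
  exact one_add_div_lt_iff_one_div_one_add_lt one_lt_s (normalized_denom ▸ by positivity)

/-- Whenever the secondary's incident interference gain `g` is at least `1/2`, its payoff
from sharing disjoint subchannels strictly exceeds its payoff when both users spread. -/
theorem stmt_10 (P N₀ g : ℝ) (hP : 0 < P) (hN₀ : 0 < N₀) (hg : 1/2 ≤ g) :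
    (1/2) * Real.log (1 + P / N₀) > Real.log (1 + (P / 2) / (N₀ + g * P / 2)) :=
  have g_pos : 0 < g := one_half_pos.trans_le hg
  (stmt_10_general hP hN₀ (add_pos hN₀ (half_pos (mul_pos g_pos hP)))).2
    ((one_div_one_add_sqrt_one_add_lt_half (div_pos hP hN₀)).trans_le hg)
end

section
/- For all real P > 0, N₀ > 0 and g > 0: log(1 + (P/2)/(N₀ + g·P/2)) + log(1 + P/(2·N₀)) > log(1 + P/N₀) if and only if g < 1. (That is, the primary's two-period payoff from spreading and thereby deterring entry, Π₁^spread + Π₀, strictly exceeds its payoff 2·Π₁^share from sharing in both periods, exactly when its incident interference gain is below 1.) -/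
/-!
By the chain rule for rates, `2·Π₁^share = log (1 + P / N₀)`, the rate of power `P` at noise `N₀`,
is the rate `Π₀` of one half of `P` plus the rate of the other half when the first counts as noise,
raising `N₀` to `N₀ + P / 2`. Subtracting `Π₀`, spreading wins exactly when the secondary's
interference `g * P / 2` is weaker than this self-interference `P / 2`.
-/

open Real Set

theorem log_one_add_add_div {x y N : ℝ} (hN : N ≠ 0) (hNx : N + x ≠ 0) (hNxy : N + x + y ≠ 0) :
    log (1 + (x + y) / N) = log (1 + x / N) + log (1 + y / (N + x)) := by
  rw [one_add_div hN, one_add_div hN, one_add_div hNx, ← add_assoc,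
    ← log_mul (div_ne_zero hNx hN) (div_ne_zero hNxy hNx), mul_comm, div_mul_div_cancel₀ hNx]

theorem strictAntiOn_log_one_add_div {y : ℝ} (hy : 0 < y) :
    StrictAntiOn (fun N ↦ log (1 + y / N)) (Ioi 0) := by
  intro M (hM : 0 < M) N (hN : 0 < N) hMN
  exact log_lt_log (by positivity) (by gcongr)

/-- The primary's two-period payoff from spreading and deterring entry,
`Π₁^spread + Π₀`, strictly exceeds `2·Π₁^share` exactly when `g < 1`. -/
theorem stmt_14 (P N₀ g : ℝ) (hP : 0 < P) (hN₀ : 0 < N₀) (hg : 0 < g) :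
    Real.log (1 + (P / 2) / (N₀ + g * P / 2)) + Real.log (1 + P / (2 * N₀))
      > Real.log (1 + P / N₀) ↔ g < 1 := by
  have hself : 0 < N₀ + P / 2 := by positivity
  have hinterf : 0 < N₀ + g * P / 2 := by positivity
  have hchain : log (1 + P / N₀) =
      log (1 + (P / 2) / (N₀ + P / 2)) + log (1 + P / (2 * N₀)) := by
    have hsum : N₀ + P / 2 + P / 2 ≠ 0 := by positivity
    have hsplit := log_one_add_add_div hN₀.ne' hself.ne' hsum
    rwa [add_halves, div_div P 2 N₀, add_comm (log _)] at hsplit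
  calc
    _ ↔ log (1 + (P / 2) / (N₀ + P / 2)) < log (1 + (P / 2) / (N₀ + g * P / 2)) := by
      rw [hchain, gt_iff_lt, add_lt_add_iff_right]
    _ ↔ N₀ + g * P / 2 < N₀ + P / 2 :=
      (strictAntiOn_log_one_add_div (half_pos hP)).lt_iff_gt hself hinterf
    _ ↔ g < 1 := by
      rw [add_lt_add_iff_left, div_lt_div_iff_of_pos_right two_pos, mul_lt_iff_lt_one_left hP]
end

section
/- For all real P > 0, N₀ > 0 and κ ∈ [0, 1], the function Δ(g) = log(1 + (P/2)/(N₀ + g·P/2)) − [ ((1 − κ)/2)·log(1 + P/N₀) + (κ/2)·log(1 + P/(N₀ + g·P/2)) ] is strictly decreasing in g on [0, ∞). -/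
/-!
Let `u` be the signal-to-interference-plus-noise ratio of a user who spreads over `t` subchannels.
Concentrating the same power in one subchannel multiplies the ratio by `t`, so up to a constant the
rate difference is `log (1 + u) - c * log (1 + t * u)`. Its derivative in `u` is
`1 / (1 + u) - c * t / (1 + t * u)`, which is positive for `u > 0` when `c * t ≤ 1 < t`, and `u`
decreases as the interference gain grows. In the two-subchannel game, `t = 2` and `c = κ / 2`.
-/

section

variable {c t : ℝ}

lemma hasDerivAt_log_one_add_sub_mul_log_one_add_mul {u : ℝ} (hu : 1 + u ≠ 0)
    (htu : 1 + t * u ≠ 0) :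
    HasDerivAt (fun x ↦ Real.log (1 + x) - c * Real.log (1 + t * x))
      (1 / (1 + u) - c * (t / (1 + t * u))) u := by
  have hlog : HasDerivAt (fun x ↦ Real.log (1 + x)) (1 / (1 + u)) u :=
    ((hasDerivAt_id' u).const_add 1).log hu
  have hlog_mul : HasDerivAt (fun x ↦ Real.log (1 + t * x)) (t / (1 + t * u)) u :=
    ((hasDerivAt_const_mul t).const_add 1).log htu
  exact hlog.sub (hlog_mul.const_mul c)

lemma strictMonoOn_log_one_add_sub_mul_log_one_add_mul (ht : 1 < t) (hc : c * t ≤ 1) :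
    StrictMonoOn (fun u ↦ Real.log (1 + u) - c * Real.log (1 + t * u)) (Set.Ici 0) := by
  have hasDeriv {u : ℝ} (hu : 0 ≤ u) :=
    hasDerivAt_log_one_add_sub_mul_log_one_add_mul (c := c) (t := t) (u := u)
      (by positivity) (by positivity)
  refine strictMonoOn_of_deriv_pos (convex_Ici 0)
    (fun u hu ↦ (hasDeriv hu).continuousAt.continuousWithinAt) fun u hu ↦ ?_
  rw [interior_Ici, Set.mem_Ioi] at hu
  rw [(hasDeriv hu.le).deriv, sub_pos]
  calc
    c * (t / (1 + t * u)) = c * t / (1 + t * u) := (mul_div_assoc ..).symm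
    _ ≤ 1 / (1 + t * u) := by gcongr
    _ < 1 / (1 + u) := by
      gcongr
      exact lt_mul_of_one_lt_left hu ht

end

lemma strictAntiOn_div_add_mul {p : ℝ} (hp : 0 < p) (N : ℝ) :
    StrictAntiOn (fun g ↦ p / (N + g * p)) {g | 0 < N + g * p} := by
  intro a ha b _ hab
  exact div_lt_div_of_pos_left hp ha (by gcongr)

theorem stmt_15_general {P t c : ℝ} (hP : 0 < P) (ht : 1 < t) (hc : c * t ≤ 1) (N₀ A : ℝ) :
    StrictAntiOn
      (fun g ↦ Real.log (1 + (P / t) / (N₀ + g * P / t)) -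
        (A + c * Real.log (1 + P / (N₀ + g * P / t))))
      {g | 0 < N₀ + g * P / t} := by
  have ht₀ : 0 < t := one_pos.trans ht
  have concentrated_ratio (g : ℝ) :
      P / (N₀ + g * (P / t)) = t * ((P / t) / (N₀ + g * (P / t))) := by
    rw [← mul_div_assoc t, mul_div_cancel₀ P ht₀.ne']
  have rate_difference_anti :=
    (strictMonoOn_log_one_add_sub_mul_log_one_add_mul ht hc).comp_strictAntiOn
      (strictAntiOn_div_add_mul (div_pos hP ht₀) N₀)
      fun _ hg ↦ (div_pos (div_pos hP ht₀) hg).le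
  simp only [mul_div_assoc, concentrated_ratio, add_comm A, ← sub_sub]
  exact fun _ ha _ hb hab ↦ sub_lt_sub_right (rate_difference_anti ha hb hab) A

/-- In the sequential game with two-sided uncertainty, the difference
`Δ(g) = Π₁^spread(g) − Π̄₁^share(g)` is strictly decreasing in `g` on `[0, ∞)`. -/
theorem stmt_15 (P N₀ κ : ℝ) (hP : 0 < P) (hN₀ : 0 < N₀) (hκ : κ ∈ Set.Icc (0:ℝ) 1)
    (Δ : ℝ → ℝ)
    (hΔ : ∀ g, Δ g = Real.log (1 + (P / 2) / (N₀ + g * P / 2)) -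
      ((1 - κ) / 2 * Real.log (1 + P / N₀) +
        κ / 2 * Real.log (1 + P / (N₀ + g * P / 2)))) :
    StrictAntiOn Δ (Set.Ici 0) := by
  rw [funext hΔ]
  exact (stmt_15_general hP one_lt_two (by linarith [hκ.2]) N₀ _).mono
    fun g (hg : 0 ≤ g) ↦ show 0 < N₀ + g * P / 2 by positivity
end

section
/- For all real P > 0 and N₀ > 0: Π₀ > Π₁^share, and for every g > 0 the mixing probability λ(g) = 2 − (Π₀ − Π₁^spread(g))/(Π₀ − Π₁^share) satisfies 0 < λ(g) < 1 if and only if g* < g < 1, where g* = 1/(√(1 + P/N₀) − 1) − 2·N₀/P. -/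
/-!
The primary's spreading rate is strictly decreasing in the interference gain `g`. It equals `Π₀` at
`g = 0` and `Π₁^share` at `g = g*`, and its values at `g = 0` and `g = 1` average to `Π₁^share`.
So `Π₁^share < Π₀`, and the two bounds on `λ g`, which amount to `Π₁^spread 1 < Π₁^spread g` and
`Π₁^spread g < Π₁^spread g*`, are `g < 1` and `g* < g`.
-/

/-- The primary's rate `Π₁^spread` when both users spread the power `P` equally over two
subchannels with noise level `N₀`, as a function of the interference gain `g`. -/
noncomputable def spreadRate (P N₀ g : ℝ) : ℝ :=
  Real.log (1 + (P / 2) / (N₀ + g * P / 2))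

/-- The primary's rate `Π₁^share` when the users occupy disjoint subchannels. -/
noncomputable def shareRate (P N₀ : ℝ) : ℝ :=
  (1 / 2) * Real.log (1 + P / N₀)

/-- The interference gain `g*` at which the primary is indifferent between spreading and sharing. -/
noncomputable def indifferenceGain (P N₀ : ℝ) : ℝ :=
  1 / (√(1 + P / N₀) - 1) - 2 * N₀ / P

section Rates

variable {P N₀ : ℝ}

lemma strictAntiOn_spreadRate (hP : 0 < P) :
    StrictAntiOn (spreadRate P N₀) {g | 0 < N₀ + g * P / 2} := by
  intro g (hg : 0 < N₀ + g * P / 2) h (hh : 0 < N₀ + h * P / 2) hgh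
  unfold spreadRate
  gcongr

lemma spreadRate_zero : spreadRate P N₀ 0 = Real.log (1 + P / (2 * N₀)) := by
  rw [spreadRate, zero_mul, zero_div, add_zero, div_div]

lemma spreadRate_zero_add_spreadRate_one (hP : 0 < P) (hN₀ : 0 < N₀) :
    spreadRate P N₀ 0 + spreadRate P N₀ 1 = 2 * shareRate P N₀ := by
  have hprod : (1 + P / (2 * N₀)) * (1 + (P / 2) / (N₀ + 1 * P / 2)) = 1 + P / N₀ := by
    field_simp
    ring
  rw [spreadRate_zero, spreadRate, ← Real.log_mul (by positivity) (by positivity), hprod,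
    shareRate]
  ring

lemma one_lt_sqrt_one_add_div (hP : 0 < P) (hN₀ : 0 < N₀) : 1 < √(1 + P / N₀) :=
  Real.lt_sqrt_of_sq_lt (by simpa using div_pos hP hN₀)

lemma noise_add_indifferenceGain_mul (hP : P ≠ 0) :
    N₀ + indifferenceGain P N₀ * P / 2 = (P / 2) / (√(1 + P / N₀) - 1) := by
  rw [indifferenceGain, sub_mul, div_mul_cancel₀ _ hP]
  ring

lemma noise_add_indifferenceGain_mul_pos (hP : 0 < P) (hN₀ : 0 < N₀) :
    0 < N₀ + indifferenceGain P N₀ * P / 2 := by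
  rw [noise_add_indifferenceGain_mul hP.ne']
  exact div_pos (half_pos hP) (sub_pos.2 (one_lt_sqrt_one_add_div hP hN₀))

lemma spreadRate_indifferenceGain (hP : 0 < P) (hN₀ : 0 < N₀) :
    spreadRate P N₀ (indifferenceGain P N₀) = shareRate P N₀ := by
  rw [spreadRate, noise_add_indifferenceGain_mul hP.ne', div_div_cancel₀ (half_pos hP).ne',
    add_sub_cancel, Real.log_sqrt (by positivity), shareRate]
  ring

lemma shareRate_lt_spreadRate_zero (hP : 0 < P) (hN₀ : 0 < N₀) :
    shareRate P N₀ < spreadRate P N₀ 0 := by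
  have hdecr : spreadRate P N₀ 1 < spreadRate P N₀ 0 :=
    strictAntiOn_spreadRate hP (show 0 < N₀ + 0 * P / 2 by simpa using hN₀)
      (show 0 < N₀ + 1 * P / 2 by positivity) one_pos
  linarith [spreadRate_zero_add_spreadRate_one hP hN₀]

lemma spreadRate_lt_shareRate_iff (hP : 0 < P) (hN₀ : 0 < N₀) {g : ℝ}
    (hg : 0 < N₀ + g * P / 2) :
    spreadRate P N₀ g < shareRate P N₀ ↔ indifferenceGain P N₀ < g := by
  rw [← spreadRate_indifferenceGain hP hN₀]
  exact (strictAntiOn_spreadRate hP).lt_iff_gt hg (noise_add_indifferenceGain_mul_pos hP hN₀)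

lemma two_mul_shareRate_lt_spreadRate_zero_add_iff (hP : 0 < P) (hN₀ : 0 < N₀) {g : ℝ}
    (hg : 0 < N₀ + g * P / 2) :
    2 * shareRate P N₀ < spreadRate P N₀ 0 + spreadRate P N₀ g ↔ g < 1 := by
  rw [← spreadRate_zero_add_spreadRate_one hP hN₀, add_lt_add_iff_left]
  exact (strictAntiOn_spreadRate hP).lt_iff_gt (show 0 < N₀ + 1 * P / 2 by positivity) hg

end Rates

section MixingProbability

variable {K : Type*} [Field K] [LinearOrder K] [IsStrictOrderedRing K] {x y m : K}

lemma two_sub_div_sub_lt_one_iff (hm : m < x) : 2 - (x - y) / (x - m) < 1 ↔ y < m := by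
  rw [sub_lt_comm, show (2 : K) - 1 = 1 by norm_num, one_lt_div (sub_pos.2 hm),
    sub_lt_sub_iff_left]

lemma two_sub_div_sub_pos_iff (hm : m < x) : 0 < 2 - (x - y) / (x - m) ↔ 2 * m < x + y := by
  rw [sub_pos, div_lt_iff₀ (sub_pos.2 hm)]
  constructor <;> intro h <;> linarith

end MixingProbability

/-- `Π₀ > Π₁^share`, and the mixing probability
`λ(g) = 2 − (Π₀ − Π₁^spread(g))/(Π₀ − Π₁^share)` is a genuine probability
(`0 < λ(g) < 1`) if and only if `g* < g < 1`. -/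
theorem stmt_17 (P N₀ : ℝ) (hP : 0 < P) (hN₀ : 0 < N₀)
    (Pi0 PiShare gstar : ℝ) (PiSpread lam : ℝ → ℝ)
    (hPi0 : Pi0 = Real.log (1 + P / (2 * N₀)))
    (hPiShare : PiShare = (1/2) * Real.log (1 + P / N₀))
    (hPiSpread : ∀ g, PiSpread g = Real.log (1 + (P / 2) / (N₀ + g * P / 2)))
    (hgstar : gstar = 1 / (Real.sqrt (1 + P / N₀) - 1) - 2 * N₀ / P)
    (hlam : ∀ g, lam g = 2 - (Pi0 - PiSpread g) / (Pi0 - PiShare)) :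
    Pi0 > PiShare ∧
    ∀ g : ℝ, 0 < g → ((0 < lam g ∧ lam g < 1) ↔ (gstar < g ∧ g < 1)) := by
  obtain rfl : Pi0 = spreadRate P N₀ 0 := hPi0.trans spreadRate_zero.symm
  obtain rfl : PiShare = shareRate P N₀ := hPiShare
  obtain rfl : PiSpread = spreadRate P N₀ := funext hPiSpread
  obtain rfl : gstar = indifferenceGain P N₀ := hgstar
  have hlt := shareRate_lt_spreadRate_zero hP hN₀
  refine ⟨hlt, fun g hg => ?_⟩
  have hnoise : 0 < N₀ + g * P / 2 := by positivity
  rw [hlam, two_sub_div_sub_pos_iff hlt, two_sub_div_sub_lt_one_iff hlt,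
    two_mul_shareRate_lt_spreadRate_zero_add_iff hP hN₀ hnoise,
    spreadRate_lt_shareRate_iff hP hN₀ hnoise, and_comm]
end
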